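/- arXiv:1309.6931 — 4 statements merged into one kernel-verified Lean document; each statement's English description precedes it below -/
import Mathlib

section
/- The Alpert refinement coefficients satisfy the orthogonality relations: for all natural numbers i, k, ((−1)^{i+k} + 1) · Σ_{j=0}^{min(i,k)} c_{i,j} c_{k,j} = 2·δ_{i,k}. In particular Σ_{j=0}^{i} c_{i,j}² = 1 for every i, and Σ_{j=0}^{min(i,k)} c_{i,j} c_{k,j} = 0 whenever i ≠ k and i + k is even. -/
/-!
Substituting `u = 2t - 1` gives `c_{i,j} = ∫_{-1}^1 p̂_i((u+1)/2) p̂_j(u) du`, so the `c_{i,j}` are the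
coordinates of the polynomial `p̂_i((u+1)/2)` of degree `i` in the orthonormal basis `p̂_0, …, p̂_i`.
Parseval's identity (`legInt_parseval`) yields
`∑_j c_{i,j} c_{k,j} = ∫_{-1}^1 p̂_i((u+1)/2) p̂_k((u+1)/2) du = 2 ∫_0^1 p̂_i p̂_k`.
When `i + k` is even the integrand is even, by the parity of `p̂_n`, and the right-hand side is
`∫_{-1}^1 p̂_i p̂_k = δ_{i,k}`; when `i + k` is odd the factor `(-1)^(i+k) + 1` vanishes.

Orthonormality itself comes from Rodrigues' formula by `n` integrations by parts
(`legInt_mul_iterate_derivative`), the norm being reduced to `∫_{-1}^1 (t²-1)^n dt`, which satisfies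
a two-term recurrence.
-/

open MeasureTheory

/-- The orthonormal Legendre polynomial of degree `n` on `[-1,1]`,
`p̂_n(t) = sqrt((2n+1)/2) · (1/(2^n n!)) dⁿ/dtⁿ (t²-1)ⁿ`. -/
noncomputable def legendreHat (n : ℕ) : ℝ → ℝ := fun t =>
  Real.sqrt ((2 * n + 1) / 2) * ((1 : ℝ) / (2 ^ n * n.factorial)) *
    iteratedDeriv n (fun s => (s ^ 2 - 1) ^ n) t

/-- The Alpert refinement coefficients `c_{i,j} = 2∫_0^1 p̂_i(t) p̂_j(2t-1) dt`. -/
noncomputable def alpertC (i j : ℕ) : ℝ :=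
  2 * ∫ t in (0:ℝ)..1, legendreHat i t * legendreHat j (2 * t - 1)

open Polynomial

/-- Integration of polynomials over `[-1,1]`, as a linear functional. -/
noncomputable def legInt : ℝ[X] →ₗ[ℝ] ℝ where
  toFun p := ∫ t in (-1:ℝ)..1, p.eval t
  map_add' p q := by
    simp only [eval_add]
    exact intervalIntegral.integral_add (p.continuous.intervalIntegrable _ _)
      (q.continuous.intervalIntegrable _ _)
  map_smul' c p := by simp

lemma legInt_apply (p : ℝ[X]) : legInt p = ∫ t in (-1:ℝ)..1, p.eval t := rfl

lemma legInt_C_mul (c : ℝ) (p : ℝ[X]) : legInt (C c * p) = c * legInt p := by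
  rw [← smul_eq_C_mul, map_smul, smul_eq_mul]

lemma legInt_derivative (p : ℝ[X]) : legInt (derivative p) = p.eval 1 - p.eval (-1) := by
  rw [legInt_apply]
  exact intervalIntegral.integral_eq_sub_of_hasDerivAt (fun x _ => p.hasDerivAt x)
    ((derivative p).continuous.intervalIntegrable _ _)

/-- The normalizing constant in front of `dⁿ/dtⁿ (t²-1)ⁿ`. -/
noncomputable def legNorm (n : ℕ) : ℝ :=
  Real.sqrt ((2 * n + 1) / 2) * ((1 : ℝ) / (2 ^ n * n.factorial))

/-- The orthonormal Legendre polynomial, as an element of `ℝ[X]`. -/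
noncomputable def legPoly (n : ℕ) : ℝ[X] :=
  C (legNorm n) * derivative^[n] ((X ^ 2 - 1) ^ n)

lemma legendreHat_eq (n : ℕ) (t : ℝ) : legendreHat n t = (legPoly n).eval t := by
  have h : (fun s : ℝ => (s ^ 2 - 1) ^ n) = fun s => ((X ^ 2 - 1 : ℝ[X]) ^ n).eval s := by
    ext s; simp
  have h2 : ∀ (k : ℕ) (p : ℝ[X]), iteratedDeriv k (fun s => p.eval s) =
      fun s => (derivative^[k] p).eval s := by
    intro k
    induction k with
    | zero => intro p; simp
    | succ k ih =>
      intro p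
      rw [iteratedDeriv_succ, ih, Function.iterate_succ_apply']
      ext s
      exact Polynomial.deriv _
  simp only [legendreHat, h, h2, legPoly, legNorm, eval_mul, eval_C]

/-- The derivatives of `(X²-1)^n` of order `k < n` vanish at both endpoints. -/
lemma eval_iterate_derivative_boundary {n k : ℕ} (hk : k < n) {x : ℝ} (hx : x ^ 2 = 1) :
    (derivative^[k] ((X ^ 2 - 1 : ℝ[X]) ^ n)).eval x = 0 := by
  obtain ⟨r, hr⟩ := pow_sub_dvd_iterate_derivative_pow (X ^ 2 - 1 : ℝ[X]) n k
  rw [hr]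
  simp [hx, Nat.sub_ne_zero_of_lt hk]

lemma legInt_mul_iterate_derivative (n : ℕ) : ∀ (k : ℕ), k ≤ n → ∀ p : ℝ[X],
    legInt (p * derivative^[k] ((X ^ 2 - 1) ^ n)) =
      (-1) ^ k * legInt (derivative^[k] p * (X ^ 2 - 1) ^ n) := by
  intro k
  induction k with
  | zero => intro _ p; simp
  | succ k ih =>
    intro hk p
    have h := legInt_derivative (p * derivative^[k] ((X ^ 2 - 1) ^ n))
    rw [derivative_mul, map_add, eval_mul, eval_mul,
      eval_iterate_derivative_boundary hk (by norm_num),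
      eval_iterate_derivative_boundary hk (by norm_num), ih (by omega)] at h
    rw [Function.iterate_succ_apply', Function.iterate_succ_apply, pow_succ (-1 : ℝ) k]
    linarith

lemma sq_sub_one_pow_monic (n : ℕ) : ((X ^ 2 - 1 : ℝ[X]) ^ n).Monic := by
  have : (X ^ 2 - 1 : ℝ[X]).Monic := by
    simpa using monic_X_pow_sub_C (1 : ℝ) (n := 2) (by norm_num)
  exact this.pow n

lemma sq_sub_one_pow_natDegree (n : ℕ) : ((X ^ 2 - 1 : ℝ[X]) ^ n).natDegree = 2 * n := by
  have : (X ^ 2 - 1 : ℝ[X]).natDegree = 2 := by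
    simpa using natDegree_X_pow_sub_C (n := 2) (r := (1 : ℝ))
  rw [natDegree_pow, this, mul_comm]

lemma legNorm_pos (n : ℕ) : 0 < legNorm n := by unfold legNorm; positivity

lemma legPoly_natDegree_le (n : ℕ) : (legPoly n).natDegree ≤ n := by
  refine (natDegree_C_mul_le _ _).trans ((natDegree_iterate_derivative _ _).trans ?_)
  rw [sq_sub_one_pow_natDegree]; omega

lemma legPoly_coeff_ne_zero (n : ℕ) : (legPoly n).coeff n ≠ 0 := by
  have h1 : ((X ^ 2 - 1 : ℝ[X]) ^ n).coeff (n + n) = 1 := by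
    have := (sq_sub_one_pow_monic n).coeff_natDegree
    rwa [sq_sub_one_pow_natDegree, two_mul] at this
  rw [legPoly, coeff_C_mul, coeff_iterate_derivative, h1]
  have h2 : (n + n).descFactorial n ≠ 0 := by
    rw [Ne, Nat.descFactorial_eq_zero_iff_lt]; omega
  simp [(legNorm_pos n).ne', h2]

lemma legInt_mul_legPoly_of_degree_lt {p : ℝ[X]} {n : ℕ} (hp : p.natDegree < n) :
    legInt (p * legPoly n) = 0 := by
  rw [legPoly, mul_left_comm, legInt_C_mul, legInt_mul_iterate_derivative n n le_rfl,
    iterate_derivative_eq_zero hp]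
  simp

lemma legInt_sq_sub_one_pow_succ (n : ℕ) :
    (2 * n + 3) * legInt ((X ^ 2 - 1) ^ (n + 1)) = -(2 * n + 2) * legInt ((X ^ 2 - 1) ^ n) := by
  have h := legInt_derivative (X * (X ^ 2 - 1) ^ (n + 1))
  have e : derivative (X * (X ^ 2 - 1) ^ (n + 1) : ℝ[X]) =
      C (2 * n + 3 : ℝ) * (X ^ 2 - 1) ^ (n + 1) + C (2 * n + 2 : ℝ) * (X ^ 2 - 1) ^ n := by
    have h2 : (C 2 : ℝ[X]) = 2 := rfl
    have h3 : (C 3 : ℝ[X]) = 3 := rfl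
    simp [derivative_mul, derivative_pow, h2, h3]
    ring
  rw [e, map_add, legInt_C_mul, legInt_C_mul] at h
  simp at h
  linarith

lemma legInt_sq_sub_one_pow (n : ℕ) :
    (-1) ^ n * legInt ((X ^ 2 - 1) ^ n) * (2 * n + 1).factorial =
      2 * (2 ^ n * n.factorial) ^ 2 := by
  induction n with
  | zero => simp [legInt_apply]; norm_num
  | succ n ih =>
    have h := legInt_sq_sub_one_pow_succ n
    have e : 2 * (n + 1) + 1 = (2 * n + 1) + 1 + 1 := by ring
    rw [e, Nat.factorial_succ (2 * n + 1 + 1), Nat.factorial_succ (2 * n + 1),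
      Nat.factorial_succ n]
    push_cast
    linear_combination (2 * (n + 1 : ℝ)) ^ 2 * ih
      - (-1) ^ n * (2 * n + 2) * ((2 * n + 1).factorial : ℝ) * h

lemma legInt_legPoly_sq (n : ℕ) : legInt (legPoly n * legPoly n) = 1 := by
  have hd : derivative^[n] (legPoly n) = C (legNorm n * (2 * n).factorial) := by
    have h := (sq_sub_one_pow_monic n).coeff_natDegree
    rw [sq_sub_one_pow_natDegree] at h
    have h0 : (derivative^[n + n] ((X ^ 2 - 1 : ℝ[X]) ^ n)).natDegree ≤ 0 := by
      refine (natDegree_iterate_derivative _ _).trans ?_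
      rw [sq_sub_one_pow_natDegree]; omega
    rw [legPoly, iterate_derivative_C_mul, ← Function.iterate_add_apply,
      eq_C_of_natDegree_le_zero h0, coeff_iterate_derivative, zero_add, ← two_mul, h, C_mul]
    simp [Nat.descFactorial_self]
  have key : legInt (legPoly n * legPoly n) =
      legNorm n * ((-1) ^ n * legInt (derivative^[n] (legPoly n) * (X ^ 2 - 1) ^ n)) := by
    rw [← legInt_mul_iterate_derivative n n le_rfl, ← legInt_C_mul, mul_left_comm]
    rfl
  rw [key, hd, legInt_C_mul]
  have h := legInt_sq_sub_one_pow n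
  rw [Nat.factorial_succ] at h
  push_cast at h
  have hs : legNorm n ^ 2 * (2 ^ n * n.factorial) ^ 2 = (2 * n + 1) / 2 := by
    rw [legNorm, mul_pow, Real.sq_sqrt (by positivity)]
    field_simp
  have hn : (2 * n + 1 : ℝ) ≠ 0 := by positivity
  apply mul_left_cancel₀ hn
  linear_combination legNorm n ^ 2 * h + 2 * hs

lemma legInt_legPoly_mul (i k : ℕ) :
    legInt (legPoly i * legPoly k) = if i = k then 1 else 0 := by
  rcases lt_trichotomy i k with h | h | h
  · rw [if_neg h.ne, legInt_mul_legPoly_of_degree_lt ((legPoly_natDegree_le i).trans_lt h)]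
  · subst h; simp [legInt_legPoly_sq]
  · rw [if_neg h.ne', mul_comm,
      legInt_mul_legPoly_of_degree_lt ((legPoly_natDegree_le k).trans_lt h)]

/-- Parseval's identity for the Legendre basis; only one factor needs bounded degree. -/
lemma legInt_parseval (r : ℝ[X]) (n : ℕ) : ∀ p : ℝ[X], p.degree < n →
    legInt (p * r) = ∑ j ∈ Finset.range n, legInt (p * legPoly j) * legInt (r * legPoly j) := by
  induction n with
  | zero =>
    intro p hp
    have : p = 0 := by simpa using hp
    simp [this]
  | succ n ih =>
    intro p hp
    -- Subtracting the multiple `s` of `p̂_n` removes the coefficient of degree `n`.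
    obtain ⟨s, hs⟩ : ∃ s, s * (legPoly n).coeff n = p.coeff n :=
      ⟨p.coeff n / (legPoly n).coeff n, div_mul_cancel₀ _ (legPoly_coeff_ne_zero n)⟩
    obtain ⟨q, hq⟩ : ∃ q, p = C s * legPoly n + q := ⟨p - C s * legPoly n, by ring⟩
    have hqd : q.degree < n := by
      rw [degree_lt_iff_coeff_zero]
      intro m hm
      have hqm : q.coeff m = p.coeff m - s * (legPoly n).coeff m := by
        rw [hq, coeff_add, coeff_C_mul]; ring
      rcases hm.eq_or_lt with rfl | hm
      · rw [hqm, hs, sub_self]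
      · rw [hqm, coeff_eq_zero_of_natDegree_lt ((legPoly_natDegree_le n).trans_lt hm),
          (degree_lt_iff_coeff_zero _ _).1 hp m hm]
        simp
    have hexp : ∀ t : ℝ[X], legInt (p * t) = s * legInt (legPoly n * t) + legInt (q * t) := by
      intro t
      rw [hq, add_mul, map_add, mul_assoc, legInt_C_mul]
    have hqn : legInt (q * legPoly n) = 0 := by
      by_cases h0 : q = 0
      · simp [h0]
      · exact legInt_mul_legPoly_of_degree_lt ((natDegree_lt_iff_degree_lt h0).2 hqd)
    rw [Finset.sum_range_succ, hexp r, ih q hqd, hexp (legPoly n), hqn, legInt_legPoly_mul,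
      if_pos rfl, mul_comm (legPoly n) r]
    have : ∑ j ∈ Finset.range n, legInt (p * legPoly j) * legInt (r * legPoly j) =
        ∑ j ∈ Finset.range n, legInt (q * legPoly j) * legInt (r * legPoly j) := by
      refine Finset.sum_congr rfl fun j hj => ?_
      rw [hexp (legPoly j), legInt_legPoly_mul, if_neg (Finset.mem_range.1 hj).ne']
      ring
    rw [this]; ring

/-- The polynomial `p̂_i((u+1)/2)`: the restriction of `p̂_i` to `[0,1]`, rescaled to `[-1,1]`. -/
noncomputable def legHalf (i : ℕ) : ℝ[X] := (legPoly i).comp (C (1 / 2) * X + C (1 / 2))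

lemma legHalf_degree_lt (i : ℕ) : (legHalf i).degree < (i + 1 : ℕ) := by
  refine (degree_le_natDegree).trans_lt ?_
  have h : (legHalf i).natDegree ≤ i := by
    refine natDegree_comp_le.trans ?_
    have h1 : (C (1 / 2 : ℝ) * X + C (1 / 2)).natDegree ≤ 1 := natDegree_linear_le
    calc _ ≤ i * 1 := Nat.mul_le_mul (legPoly_natDegree_le i) h1
      _ = i := mul_one i
  exact_mod_cast Nat.lt_succ_of_le h

/-- The change of variables `u = 2t - 1`. -/
lemma legInt_comp_half (f : ℝ[X]) (g : ℝ → ℝ) (h : ∀ t, g t = f.eval (2 * t - 1)) :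
    legInt f = 2 * ∫ t in (0:ℝ)..1, g t := by
  simp only [h, legInt_apply]
  have := intervalIntegral.mul_integral_comp_mul_sub (a := 0) (b := 1)
    (f := fun t => f.eval t) (2 : ℝ) 1
  rw [this]; norm_num

lemma alpertC_eq (i j : ℕ) : alpertC i j = legInt (legHalf i * legPoly j) := by
  rw [alpertC, ← legInt_comp_half]
  intro t
  simp only [legendreHat_eq, legHalf, eval_mul, eval_comp, eval_add, eval_C, eval_X]
  congr 2
  ring

lemma legPoly_eval_neg (n : ℕ) (t : ℝ) :
    (legPoly n).eval (-t) = (-1) ^ n * (legPoly n).eval t := by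
  simp only [← legendreHat_eq, legendreHat]
  have h := iteratedDeriv_comp_neg n (fun s : ℝ => (s ^ 2 - 1) ^ n) (-t)
  simp only [neg_sq, neg_neg, smul_eq_mul] at h
  rw [h]; ring

lemma legInt_legHalf_mul {i k : ℕ} (h : Even (i + k)) :
    legInt (legHalf i * legHalf k) = legInt (legPoly i * legPoly k) := by
  rw [legInt_comp_half _ (fun t => (legPoly i * legPoly k).eval t), legInt_apply]
  · have hi : ∀ a b : ℝ, IntervalIntegrable (fun t => (legPoly i * legPoly k).eval t)
        MeasureTheory.volume a b :=
      fun a b => (legPoly i * legPoly k).continuous.intervalIntegrable a b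
    rw [← intervalIntegral.integral_add_adjacent_intervals (hi (-1) 0) (hi 0 1)]
    have h2 : ∫ t in (-1:ℝ)..0, (legPoly i * legPoly k).eval t =
        ∫ t in (0:ℝ)..1, (legPoly i * legPoly k).eval t := by
      have := intervalIntegral.integral_comp_neg (a := (0:ℝ)) (b := 1)
        (fun t => (legPoly i * legPoly k).eval t)
      rw [neg_zero] at this
      rw [← this]
      congr 1
      ext t
      rw [eval_mul, eval_mul, legPoly_eval_neg, legPoly_eval_neg, mul_mul_mul_comm, ← pow_add,
        h.neg_one_pow, one_mul]
    rw [h2]; ring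
  · intro t
    have e : (1 / 2 : ℝ) * (2 * t - 1) + 1 / 2 = t := by ring
    simp only [legHalf, eval_mul, eval_comp, eval_add, eval_C, eval_X, e]

lemma sum_alpertC_mul {i k : ℕ} (h : Even (i + k)) :
    ∑ j ∈ Finset.range (min i k + 1), alpertC i j * alpertC k j = if i = k then 1 else 0 := by
  rw [← legInt_legPoly_mul, ← legInt_legHalf_mul h]
  simp only [alpertC_eq]
  rcases le_total i k with hik | hik
  · rw [min_eq_left hik, legInt_parseval _ _ _ (legHalf_degree_lt i)]
  · rw [min_eq_right hik, mul_comm (legHalf i), legInt_parseval _ _ _ (legHalf_degree_lt k)]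
    exact Finset.sum_congr rfl fun j _ => mul_comm _ _

theorem alpertC_orthogonality :
    (∀ i k : ℕ, ((-1 : ℝ) ^ (i + k) + 1) *
        ∑ j ∈ Finset.range (min i k + 1), alpertC i j * alpertC k j =
          2 * (if i = k then (1 : ℝ) else 0)) ∧
    (∀ i : ℕ, ∑ j ∈ Finset.range (i + 1), alpertC i j ^ 2 = 1) ∧
    (∀ i k : ℕ, i ≠ k → Even (i + k) →
        ∑ j ∈ Finset.range (min i k + 1), alpertC i j * alpertC k j = 0) := by
  refine ⟨fun i k => ?_, fun i => ?_, fun i k hne h => ?_⟩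
  · rcases Nat.even_or_odd (i + k) with h | h
    · rw [sum_alpertC_mul h, h.neg_one_pow]; norm_num
    · have hne : i ≠ k := by
        rintro rfl
        exact (Nat.not_even_iff_odd.2 h) ⟨i, rfl⟩
      rw [h.neg_one_pow, if_neg hne]; norm_num
  · have h := sum_alpertC_mul (i := i) (k := i) ⟨i, rfl⟩
    rw [min_self, if_pos rfl] at h
    simpa only [sq] using h
  · rw [sum_alpertC_mul h, if_neg hne]
end

section
/- The Alpert refinement coefficients near the diagonal have the explicit values: c_{i,i} = 1/2^i for every i ≥ 0; c_{i,i−1} = sqrt((2i+1)(2i−1))/2^i for every i ≥ 1; and c_{i,i−2} = (i−2)·sqrt((2i+1)(2i−3))/2^i for every i ≥ 2. -/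
/-!
After the substitution `x = 2t - 1`, the coefficient `c_{i,j}` becomes the integral over `[-1,1]` of
`p̂_i((x+1)/2) p̂_j(x)`. Rodrigues' formula for `p̂_j` and `j` integrations by parts (whose boundary
terms vanish because `(x²-1)^j` has zeros of order `j` at `±1`) turn it into a constant times
`∫ (D^{i+j} (s²-1)^i)((x+1)/2) · (1-x²)^j dx`; this is `alpertC_eq`.

For `j = i, i-1, i-2` the derivative `D^{i+j} (s²-1)^i` has degree `0, 1, 2`, and it only sees the two
top terms `s^{2i} - i s^{2i-2}` (`iterate_derivative_rodrigues`). The claim then reduces to the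
moments of `(1-x²)^j` of order at most two. These follow from `I_j = ∫ (1-x²)^j = 2^{2j+1} j!²/(2j+1)!`,
which comes from the recurrence `(2j+3) I_{j+1} = (2j+2) I_j`.
-/

open MeasureTheory

open Polynomial intervalIntegral

/-! ### Rodrigues' formula and integration by parts -/

/-- The polynomial `(X² - 1)^n` of Rodrigues' formula. -/
noncomputable def rodrigues (n : ℕ) : ℝ[X] := (X ^ 2 - 1) ^ n

lemma iteratedDeriv_polynomial (p : ℝ[X]) (n : ℕ) :
    iteratedDeriv n (fun x => p.eval x) = fun x => (derivative^[n] p).eval x := by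
  induction n with
  | zero => simp
  | succ n ih =>
    rw [iteratedDeriv_succ, ih]
    funext x
    rw [Polynomial.deriv, Function.iterate_succ_apply']

lemma legendreHat_eq_s4 (n : ℕ) (t : ℝ) :
    legendreHat n t = Real.sqrt ((2 * n + 1) / 2) * ((1 : ℝ) / (2 ^ n * n.factorial)) *
      (derivative^[n] (rodrigues n)).eval t := by
  have h : (fun s : ℝ => (s ^ 2 - 1) ^ n) = fun s => (rodrigues n).eval s := by
    funext s; simp [rodrigues]
  rw [legendreHat, h, iteratedDeriv_polynomial]

lemma eval_iterate_derivative_rodrigues_eq_zero {k n : ℕ} (hk : k < n) {a : ℝ}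
    (ha : a ^ 2 = 1) : (derivative^[k] (rodrigues n)).eval a = 0 := by
  have h1 : (X - C a) ^ n ∣ rodrigues n := by
    refine pow_dvd_pow_of_dvd ⟨X + C a, ?_⟩ n
    have : (C a) ^ 2 = (1 : ℝ[X]) := by rw [← C_pow, ha, C_1]
    linear_combination this
  have h2 := pow_sub_dvd_iterate_derivative_of_pow_dvd k h1
  exact dvd_iff_isRoot.mp ((dvd_pow_self _ (by omega)).trans h2)

/-- Repeated integration by parts against Rodrigues' polynomial. -/
lemma integral_mul_iterate_derivative_rodrigues (n k : ℕ) (hk : k ≤ n) (R : ℝ[X]) :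
    ∫ x in (-1 : ℝ)..1, R.eval x * (derivative^[k] (rodrigues n)).eval x =
      (-1) ^ k * ∫ x in (-1 : ℝ)..1, (derivative^[k] R).eval x * (rodrigues n).eval x := by
  induction k generalizing R with
  | zero => simp
  | succ k ih =>
    have h := integral_mul_deriv_eq_deriv_mul (a := (-1 : ℝ)) (b := 1)
      (u := fun x => R.eval x) (u' := fun x => (derivative R).eval x)
      (v := fun x => (derivative^[k] (rodrigues n)).eval x)
      (v' := fun x => (derivative^[k + 1] (rodrigues n)).eval x)
      (fun x _ => R.hasDerivAt x)
      (fun x _ => by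
        rw [Function.iterate_succ_apply']
        exact (derivative^[k] (rodrigues n)).hasDerivAt x)
      ((derivative R).continuous.intervalIntegrable _ _)
      ((derivative^[k + 1] (rodrigues n)).continuous.intervalIntegrable _ _)
    rw [h, ih (by omega), eval_iterate_derivative_rodrigues_eq_zero (by omega) (by norm_num),
      eval_iterate_derivative_rodrigues_eq_zero (by omega) (by norm_num),
      Function.iterate_succ_apply]
    ring

lemma iterate_derivative_comp_affine (p : ℝ[X]) (a b : ℝ) (k : ℕ) :
    derivative^[k] (p.comp (C a * X + C b)) =
      C (a ^ k) * (derivative^[k] p).comp (C a * X + C b) := by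
  induction k with
  | zero => simp
  | succ k ih =>
    rw [Function.iterate_succ_apply', ih, Function.iterate_succ_apply']
    simp only [derivative_mul, derivative_C, derivative_comp, derivative_add, derivative_X, pow_succ,
      C_mul]
    ring

/-- The coefficient `c_{i,j}` after substituting `x = 2t - 1` and integrating by parts `j` times. The
last factor `2^j` of the denominator comes from differentiating in `x` through `(x+1)/2`. -/
lemma alpertC_eq_s4 (i j : ℕ) :
    alpertC i j = Real.sqrt ((2 * i + 1) / 2) * Real.sqrt ((2 * j + 1) / 2) /
      (2 ^ i * i.factorial * (2 ^ j * j.factorial) * 2 ^ j) *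
      ∫ x in (-1 : ℝ)..1,
        (derivative^[i + j] (rodrigues i)).eval (1 / 2 * x + 1 / 2) * (1 - x ^ 2) ^ j := by
  have hsub := integral_comp_mul_sub (a := (0 : ℝ)) (b := 1)
    (fun x => legendreHat i (1 / 2 * x + 1 / 2) * legendreHat j x) (c := 2) two_ne_zero 1
  have hcongr : (fun t : ℝ => legendreHat i t * legendreHat j (2 * t - 1)) =
      fun t => legendreHat i (1 / 2 * (2 * t - 1) + 1 / 2) * legendreHat j (2 * t - 1) := by
    funext t
    congr 2
    ring
  have hp := integral_mul_iterate_derivative_rodrigues j j le_rfl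
    ((derivative^[i] (rodrigues i)).comp (C (1 / 2) * X + C (1 / 2)))
  rw [iterate_derivative_comp_affine, ← Function.iterate_add_apply, add_comm j i] at hp
  simp only [eval_mul, eval_comp, eval_add, eval_C, eval_X] at hp
  have hsign : ∀ x : ℝ, (rodrigues j).eval x = (-1) ^ j * (1 - x ^ 2) ^ j := by
    intro x
    rw [← mul_pow]
    simp [rodrigues]
  have hrhs : ∫ x in (-1 : ℝ)..1, (1 / 2) ^ j *
        (derivative^[i + j] (rodrigues i)).eval (1 / 2 * x + 1 / 2) * (rodrigues j).eval x =
      (1 / 2) ^ j * (-1) ^ j * ∫ x in (-1 : ℝ)..1,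
        (derivative^[i + j] (rodrigues i)).eval (1 / 2 * x + 1 / 2) * (1 - x ^ 2) ^ j := by
    rw [← intervalIntegral.integral_const_mul]
    congr 1
    funext x
    rw [hsign]
    ring
  rw [hrhs] at hp
  have hlhs : ∫ x in (-1 : ℝ)..1, legendreHat i (1 / 2 * x + 1 / 2) * legendreHat j x =
      (Real.sqrt ((2 * i + 1) / 2) * ((1 : ℝ) / (2 ^ i * i.factorial))) *
      (Real.sqrt ((2 * j + 1) / 2) * ((1 : ℝ) / (2 ^ j * j.factorial))) *
      ∫ x in (-1 : ℝ)..1, (derivative^[i] (rodrigues i)).eval (1 / 2 * x + 1 / 2) *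
        (derivative^[j] (rodrigues j)).eval x := by
    rw [← intervalIntegral.integral_const_mul]
    congr 1
    funext x
    rw [legendreHat_eq_s4, legendreHat_eq_s4]
    ring
  have hm : ((-1 : ℝ)) ^ j * (-1) ^ j = 1 := by rw [← mul_pow]; norm_num
  rw [alpertC, hcongr, hsub]
  norm_num only [smul_eq_mul]
  norm_num only at hlhs hp ⊢
  rw [hlhs, hp]
  generalize (∫ x in (-1 : ℝ)..1, _ : ℝ) = J
  rw [div_pow, one_pow]
  have hi := Nat.factorial_ne_zero i
  have hj := Nat.factorial_ne_zero j
  field_simp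
  linear_combination J * hm

/-! ### Top coefficients of Rodrigues' polynomial -/

/-- The expansion `(X² - 1)^{n+1} = X^{2n+2} - (n+1) X^{2n} + (lower order)`. -/
lemma rodrigues_succ_expansion (n : ℕ) : ∃ R : ℝ[X], R.degree < (2 * n : ℕ) ∧
    rodrigues (n + 1) = X ^ (2 * n + 2) - C ((n : ℝ) + 1) * X ^ (2 * n) + R := by
  induction n with
  | zero => exact ⟨0, by simp, by simp [rodrigues]⟩
  | succ n ih =>
    obtain ⟨R, hR, h⟩ := ih
    refine ⟨C ((n : ℝ) + 1) * X ^ (2 * n) + (X ^ 2 - 1) * R, ?_, ?_⟩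
    · refine lt_of_le_of_lt (degree_add_le _ _) (max_lt ?_ ?_)
      · refine lt_of_le_of_lt (degree_C_mul_X_pow_le _ _) ?_
        exact_mod_cast (by omega : 2 * n < 2 * (n + 1))
      · rcases eq_or_ne R 0 with rfl | hR0
        · rw [mul_zero, degree_zero]
          exact WithBot.bot_lt_coe _
        · have h2 : ((X : ℝ[X]) ^ 2 - 1).degree = 2 := by
            rw [← C_1]; exact degree_X_pow_sub_C (by norm_num) _
          rw [degree_mul, h2, degree_eq_natDegree hR0]
          rw [degree_eq_natDegree hR0] at hR
          have : R.natDegree < 2 * n := by exact_mod_cast hR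
          exact_mod_cast (by omega : 2 + R.natDegree < 2 * (n + 1))
    · rw [rodrigues, pow_succ, ← rodrigues, h]
      push_cast
      simp only [C_add, C_1]
      ring

lemma iterate_derivative_rodrigues (n : ℕ) : derivative^[2 * n] (rodrigues (n + 1)) =
    C (((2 * n + 2).factorial : ℝ) / 2) * X ^ 2 - C (((n : ℝ) + 1) * (2 * n).factorial) := by
  obtain ⟨R, hR, h⟩ := rodrigues_succ_expansion n
  rw [h, iterate_map_add, iterate_map_sub, iterate_derivative_C_mul,
    iterate_derivative_X_pow_eq_natCast_mul, iterate_derivative_X_pow_eq_natCast_mul,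
    iterate_derivative_eq_zero_of_degree_lt hR, Nat.descFactorial_self]
  have h2 : (((2 * n + 2).descFactorial (2 * n) : ℕ) : ℝ) = ((2 * n + 2).factorial : ℝ) / 2 := by
    have := Nat.factorial_mul_descFactorial (n := 2 * n + 2) (k := 2 * n) (by omega)
    rw [Nat.add_sub_cancel_left] at this
    rw [← this]
    push_cast [Nat.factorial]
    ring
  rw [← h2]
  simp

lemma derivative_half_square (a b : ℝ) :
    derivative (C (a / 2) * X ^ 2 - C b) = C a * X := by
  rw [derivative_sub, derivative_C, derivative_C_mul, derivative_X_sq, ← mul_assoc, ← C_mul,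
    div_mul_cancel₀ a two_ne_zero, sub_zero]

/-! ### Moments of the weight -/

/-- The moment `I_j = ∫ (1-x²)^j` over `[-1,1]`. -/
noncomputable def weightIntegral (j : ℕ) : ℝ := ∫ x in (-1 : ℝ)..1, (1 - x ^ 2) ^ j

lemma hasDerivAt_weight (j : ℕ) (x : ℝ) :
    HasDerivAt (fun x : ℝ => (1 - x ^ 2) ^ (j + 1)) (-(2 * (j + 1)) * (x * (1 - x ^ 2) ^ j)) x := by
  have h := (((hasDerivAt_id x).pow 2).const_sub 1).pow (j + 1)
  refine h.congr_deriv ?_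
  simp
  ring

/-- The recurrence obtained by integrating the derivative of `x (1-x²)^{j+1}`. -/
lemma weightIntegral_succ (j : ℕ) :
    (2 * j + 3) * weightIntegral (j + 1) = (2 * j + 2) * weightIntegral j := by
  have h := integral_eq_sub_of_hasDerivAt (a := (-1 : ℝ)) (b := 1)
    (f := fun x => x * (1 - x ^ 2) ^ (j + 1))
    (f' := fun x => (2 * j + 3) * (1 - x ^ 2) ^ (j + 1) - (2 * j + 2) * (1 - x ^ 2) ^ j)
    (fun x _ => ((hasDerivAt_id x).mul (hasDerivAt_weight j x)).congr_deriv (by simp; ring))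
    (Continuous.intervalIntegrable (by fun_prop) _ _)
  rw [intervalIntegral.integral_sub (Continuous.intervalIntegrable (by fun_prop) _ _)
    (Continuous.intervalIntegrable (by fun_prop) _ _), intervalIntegral.integral_const_mul,
    intervalIntegral.integral_const_mul] at h
  simp only [weightIntegral]
  norm_num at h
  linarith

lemma integral_mul_weight (j : ℕ) : ∫ x in (-1 : ℝ)..1, x * (1 - x ^ 2) ^ j = 0 := by
  have h := integral_eq_sub_of_hasDerivAt (a := (-1 : ℝ)) (b := 1)
    (fun x _ => hasDerivAt_weight j x) (Continuous.intervalIntegrable (by fun_prop) _ _)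
  rw [intervalIntegral.integral_const_mul] at h
  norm_num at h
  rcases h with h | h
  · exact absurd h (by positivity)
  · exact h

lemma weightIntegral_eq (j : ℕ) :
    weightIntegral j = 2 ^ (2 * j + 1) * (j.factorial : ℝ) ^ 2 / (2 * j + 1).factorial := by
  induction j with
  | zero => norm_num [weightIntegral]
  | succ j ih =>
    have h := weightIntegral_succ j
    have h3 : (2 * (j : ℝ) + 3) ≠ 0 := by positivity
    have hf : ((2 * j + 1).factorial : ℝ) ≠ 0 := by positivity
    rw [ih] at h
    apply mul_left_cancel₀ h3
    rw [h]
    rw [show 2 * (j + 1) + 1 = 2 * j + 1 + 1 + 1 by ring, Nat.factorial_succ (2 * j + 1 + 1),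
      Nat.factorial_succ (2 * j + 1), Nat.factorial_succ j]
    push_cast
    field_simp
    ring

/-- Moments of order at most two, for a quadratic polynomial evaluated at `(x+1)/2`. -/
lemma integral_quadratic_weight (a b c : ℝ) (j : ℕ) :
    ∫ x in (-1 : ℝ)..1, (a * (1 / 2 * x + 1 / 2) ^ 2 + b * (1 / 2 * x + 1 / 2) + c) *
      (1 - x ^ 2) ^ j =
    (a * (j + 2) / (2 * (2 * j + 3)) + b / 2 + c) * weightIntegral j := by
  have h : (fun x : ℝ => (a * (1 / 2 * x + 1 / 2) ^ 2 + b * (1 / 2 * x + 1 / 2) + c) *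
      (1 - x ^ 2) ^ j) = fun x => ((a / 2 + b / 2 + c) * (1 - x ^ 2) ^ j +
        (a / 2 + b / 2) * (x * (1 - x ^ 2) ^ j)) - a / 4 * (1 - x ^ 2) ^ (j + 1) := by
    funext x
    ring
  rw [h, intervalIntegral.integral_sub (Continuous.intervalIntegrable (by fun_prop) _ _)
    (Continuous.intervalIntegrable (by fun_prop) _ _),
    intervalIntegral.integral_add (Continuous.intervalIntegrable (by fun_prop) _ _)
    (Continuous.intervalIntegrable (by fun_prop) _ _), intervalIntegral.integral_const_mul,
    intervalIntegral.integral_const_mul, intervalIntegral.integral_const_mul, integral_mul_weight]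
  change (a / 2 + b / 2 + c) * weightIntegral j + (a / 2 + b / 2) * 0
    - a / 4 * weightIntegral (j + 1) = _
  have h3 : (2 * (j : ℝ) + 3) ≠ 0 := by positivity
  have hs : weightIntegral (j + 1) = (2 * j + 2) * weightIntegral j / (2 * j + 3) := by
    rw [eq_div_iff h3, ← weightIntegral_succ]; ring
  rw [hs]
  field_simp
  ring

/-! ### The three diagonals -/

lemma alpertC_self (i : ℕ) : alpertC i i = 1 / 2 ^ i := by
  have hd : derivative^[i + i] (rodrigues i) = C ((2 * i).factorial : ℝ) := by
    cases i with
    | zero => simp [rodrigues]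
    | succ n =>
      rw [show n + 1 + (n + 1) = 2 + 2 * n by ring, Function.iterate_add_apply,
        iterate_derivative_rodrigues]
      rw [mul_add, mul_one, Function.iterate_succ_apply, Function.iterate_one,
        derivative_half_square, derivative_C_mul, derivative_X, mul_one]
  have hint := integral_quadratic_weight 0 0 ((2 * i).factorial) i
  rw [alpertC_eq_s4, hd]
  simp only [eval_C]
  simp only [zero_mul, zero_add, zero_div] at hint
  rw [hint, weightIntegral_eq, Real.mul_self_sqrt (by positivity), Nat.factorial_succ]
  push_cast
  field_simp
  ring

lemma sqrt_norm_mul (a b : ℝ) (ha : 0 ≤ a) :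
    Real.sqrt (a / 2) * Real.sqrt (b / 2) = Real.sqrt (a * b) / 2 := by
  rw [← Real.sqrt_mul (by positivity), show a / 2 * (b / 2) = a * b / 2 ^ 2 by ring,
    Real.sqrt_div' _ (by positivity), Real.sqrt_sq (by norm_num)]

lemma alpertC_succ_self (j : ℕ) : alpertC (j + 1) j =
    Real.sqrt ((2 * (j + 1 : ℕ) + 1) * (2 * j + 1)) / 2 ^ (j + 1) := by
  have hd : derivative^[j + 1 + j] (rodrigues (j + 1)) = C ((2 * j + 2).factorial : ℝ) * X := by
    rw [show j + 1 + j = 1 + 2 * j by ring, Function.iterate_add_apply,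
      iterate_derivative_rodrigues]
    exact derivative_half_square _ _
  have hint := integral_quadratic_weight 0 ((2 * j + 2).factorial) 0 j
  rw [alpertC_eq_s4, hd]
  simp only [eval_mul, eval_C, eval_X]
  simp only [zero_mul, zero_add, zero_div, add_zero] at hint
  rw [hint, weightIntegral_eq, sqrt_norm_mul _ _ (by positivity), Nat.factorial_succ (2 * j + 1),
    Nat.factorial_succ j]
  push_cast
  field_simp
  ring

lemma alpertC_add_two_self (j : ℕ) : alpertC (j + 2) j =
    j * Real.sqrt ((2 * (j + 2 : ℕ) + 1) * (2 * j + 1)) / 2 ^ (j + 2) := by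
  have hint := integral_quadratic_weight (((2 * (j + 1) + 2).factorial : ℝ) / 2) 0
    (-(((j + 1 : ℕ) : ℝ) + 1) * (2 * (j + 1)).factorial) j
  rw [alpertC_eq_s4, show j + 2 + j = 2 * (j + 1) by ring, iterate_derivative_rodrigues (j + 1)]
  simp only [eval_mul, eval_C, eval_X, eval_sub, eval_pow]
  simp only [zero_mul, zero_div, add_zero, neg_mul, ← sub_eq_add_neg] at hint
  rw [hint, weightIntegral_eq, sqrt_norm_mul _ _ (by positivity),
    show 2 * (j + 1) + 2 = 2 * j + 1 + 1 + 1 + 1 by ring, show 2 * (j + 1) = 2 * j + 1 + 1 by ring,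
    Nat.factorial_succ (2 * j + 1 + 1 + 1), Nat.factorial_succ (2 * j + 1 + 1),
    Nat.factorial_succ (2 * j + 1), Nat.factorial_succ (j + 1), Nat.factorial_succ j]
  push_cast
  field_simp
  ring

theorem alpertC_near_diagonal :
    (∀ i : ℕ, alpertC i i = 1 / 2 ^ i) ∧
    (∀ i : ℕ, 1 ≤ i →
      alpertC i (i - 1) = Real.sqrt ((2 * i + 1) * (2 * i - 1)) / 2 ^ i) ∧
    (∀ i : ℕ, 2 ≤ i →
      alpertC i (i - 2) = ((i : ℝ) - 2) * Real.sqrt ((2 * i + 1) * (2 * i - 3)) / 2 ^ i) := by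
  refine ⟨alpertC_self, fun i hi => ?_, fun i hi => ?_⟩
  · obtain ⟨j, rfl⟩ := Nat.exists_eq_add_of_le' hi
    rw [Nat.add_sub_cancel, alpertC_succ_self]
    congr 3
    push_cast
    ring
  · obtain ⟨j, rfl⟩ := Nat.exists_eq_add_of_le' hi
    rw [Nat.add_sub_cancel, alpertC_add_two_self]
    have h1 : (2 * (j : ℝ) + 1) = 2 * ((j + 2 : ℕ) : ℝ) - 3 := by push_cast; ring
    have h2 : ((j + 2 : ℕ) : ℝ) - 2 = j := by push_cast; ring
    rw [h1, h2]
end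

section
/- The first column of the Alpert refinement matrix is given by: c_{2i,0} = 0 for every i ≥ 1, and c_{2i+1,0} = (−1)^i · (sqrt(4i+3)/2) · (1/2)_i / (i+1)! for every i ≥ 0. -/
/-!
Since `p̂₀` is the constant `1/√2`, the coefficient `c_{n,0}` is a multiple of the integral over
`[0,1]` of the `n`-th derivative of `(t² - 1)ⁿ`, that is, of the difference between the values of
the `(n-1)`-st derivative at `1` and at `0`. The value at `1` vanishes, `1` being a root of
multiplicity `n` (`eval_one_iterate_derivative`); the value at `0` is `(n-1)!` times the coefficient
of `X^(n-1)` in `(X² - 1)ⁿ` (`alpertC_succ_zero`). That coefficient is zero for even `n`, and for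
`n = 2i+1` it is `(-1)^(i+1) * (2i+1).choose i`; the stated form then follows from
`(1/2)_i 4^i i! = (2i)!` (`poch_half_mul`).
-/

open MeasureTheory

/-- The Pochhammer symbol `(a)_k = a(a+1)⋯(a+k-1)`. -/
noncomputable def poch (a : ℝ) (k : ℕ) : ℝ := ∏ m ∈ Finset.range k, (a + m)

open Polynomial in
/-- The `n`-fold derivative of the Rodrigues generator `(s² - 1)ⁿ` as a polynomial, with `(s² - 1)ⁿ`
written as `(s - 1)ⁿ` expanded by `s ↦ s²` so that its coefficients can be read off. -/
lemma iteratedDeriv_sq_sub_one_pow (n k : ℕ) :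
    iteratedDeriv k (fun s : ℝ => (s ^ 2 - 1) ^ n) =
      fun s => (derivative^[k] (expand ℝ 2 ((X + C (-1)) ^ n))).eval s := by
  induction k with
  | zero =>
    funext s
    simp [sub_eq_add_neg]
  | succ k ih =>
    rw [iteratedDeriv_succ, ih]
    funext s
    rw [Polynomial.deriv, Function.iterate_succ_apply']

open Polynomial in
/-- The boundary term at `1` vanishes because `1` is a root of `(X² - 1)^(m+1)` of
multiplicity `m + 1 > m`. -/
lemma eval_one_iterate_derivative (m : ℕ) :
    (derivative^[m] (expand ℝ 2 ((X + C (-1)) ^ (m + 1)))).eval 1 = 0 := by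
  rw [map_pow]
  have h := pow_sub_dvd_iterate_derivative_pow (expand ℝ 2 (X + C (-1))) (m + 1) m
  rw [Nat.add_sub_cancel_left, pow_one] at h
  exact eval_eq_zero_of_dvd_of_eval_eq_zero h (by simp)

open Polynomial in
lemma eval_zero_iterate_derivative (m : ℕ) (p : ℝ[X]) :
    (derivative^[m] p).eval 0 = m.factorial * p.coeff m := by
  rw [← coeff_zero_eq_eval_zero, coeff_iterate_derivative, zero_add, Nat.descFactorial_self,
    nsmul_eq_mul]

open Polynomial in
/-- The first column in terms of a single coefficient of `(X² - 1)^(m+1)`: since `p̂₀` is constant,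
the fundamental theorem of calculus leaves only the boundary term at `0`. -/
lemma alpertC_succ_zero (m : ℕ) :
    alpertC (m + 1) 0 = -(Real.sqrt (2 * m + 3) / (2 ^ (m + 1) * (m + 1).factorial) *
      (m.factorial * (expand ℝ 2 ((X + C (-1)) ^ (m + 1))).coeff m)) := by
  set p : ℝ[X] := expand ℝ 2 ((X + C (-1)) ^ (m + 1)) with hp
  have hint : ∫ t in (0:ℝ)..1, (derivative^[m + 1] p).eval t = -(m.factorial * p.coeff m) := by
    rw [intervalIntegral.integral_eq_sub_of_hasDerivAt
      (f := fun t => (derivative^[m] p).eval t), eval_one_iterate_derivative,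
      eval_zero_iterate_derivative, zero_sub]
    · intro x _
      rw [Function.iterate_succ_apply']
      exact Polynomial.hasDerivAt _ _
    · exact (Polynomial.continuous _).intervalIntegrable _ _
  have hsqrt : Real.sqrt ((2 * ((m + 1 : ℕ) : ℝ) + 1) / 2) * Real.sqrt (1 / 2) =
      Real.sqrt (2 * m + 3) / 2 := by
    rw [← Real.sqrt_mul (by positivity), show (2 * ((m + 1 : ℕ) : ℝ) + 1) / 2 * (1 / 2) =
      (2 * m + 3) / 2 ^ 2 by push_cast; ring, Real.sqrt_div (by positivity),
      Real.sqrt_sq (by norm_num)]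
  have hfun : ∀ t : ℝ, legendreHat (m + 1) t * legendreHat 0 (2 * t - 1) =
      Real.sqrt (2 * m + 3) / 2 * (1 / (2 ^ (m + 1) * (m + 1).factorial)) *
        (derivative^[m + 1] p).eval t := by
    intro t
    simp only [legendreHat]
    rw [iteratedDeriv_sq_sub_one_pow, ← hp, ← hsqrt]
    simp only [iteratedDeriv_zero, pow_zero, Nat.factorial_zero, Nat.cast_zero, Nat.cast_one,
      mul_zero, zero_add, mul_one, div_one]
    ring
  simp only [alpertC, hfun]
  rw [intervalIntegral.integral_const_mul, hint]
  ring

lemma poch_half_mul (i : ℕ) :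
    poch (1 / 2) i * (4 ^ i * i.factorial) = (2 * i).factorial := by
  induction i with
  | zero => simp [poch]
  | succ i ih =>
    have h : poch (1 / 2) (i + 1) = poch (1 / 2) i * (1 / 2 + i) := Finset.prod_range_succ _ _
    rw [h, show 2 * (i + 1) = 2 * i + 1 + 1 by ring, Nat.factorial_succ (2 * i + 1),
      Nat.factorial_succ (2 * i), Nat.factorial_succ i]
    push_cast
    rw [← ih]
    ring

theorem alpertC_first_column :
    (∀ i : ℕ, 1 ≤ i → alpertC (2 * i) 0 = 0) ∧
    (∀ i : ℕ, alpertC (2 * i + 1) 0 =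
      (-1 : ℝ) ^ i * (Real.sqrt (4 * i + 3) / 2) * poch (1 / 2) i / (i + 1).factorial) := by
  constructor
  · intro i hi
    obtain ⟨j, rfl⟩ := Nat.exists_eq_add_of_le' hi
    -- Only even powers occur in `(X² - 1)^(2j+2)`, so its coefficient at `2j+1` is zero.
    rw [show 2 * (j + 1) = (2 * j + 1) + 1 by ring, alpertC_succ_zero,
      Polynomial.coeff_expand two_pos, if_neg (by omega)]
    simp
  · intro i
    have hchoose : ((2 * i + 1).choose i : ℝ) * (i.factorial * (i + 1).factorial) =
        (2 * i + 1).factorial := by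
      have h := Nat.choose_mul_factorial_mul_factorial (show i ≤ 2 * i + 1 by omega)
      rw [show 2 * i + 1 - i = i + 1 by omega, mul_assoc] at h
      exact_mod_cast h
    rw [alpertC_succ_zero, Polynomial.coeff_expand_mul' two_pos, Polynomial.coeff_X_add_C_pow,
      show 2 * i + 1 - i = i + 1 by omega, ← poch_half_mul,
      show (2 * ((2 * i : ℕ) : ℝ) + 3) = 4 * i + 3 by push_cast; ring, ← hchoose,
      show (2 : ℝ) ^ (2 * i + 1) = 2 * 4 ^ i by rw [pow_succ, pow_mul]; norm_num; ring]
    have hc : ((2 * i + 1).choose i : ℝ) ≠ 0 :=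
      Nat.cast_ne_zero.2 (Nat.choose_pos (by omega)).ne'
    have h1 : (i.factorial : ℝ) ≠ 0 := Nat.cast_ne_zero.2 i.factorial_ne_zero
    have h2 : ((i + 1).factorial : ℝ) ≠ 0 := Nat.cast_ne_zero.2 (i + 1).factorial_ne_zero
    field_simp
    ring
end

section
/- For all natural numbers i, j with 1 ≤ j ≤ i, the even-odd monic Legendre refinement integral has the balanced ₄F₃ representation I_{2i,2j−1} = −2^{2j−2} · [(−i)_j (−i+1/2)_{j−1} (2j−1)! / ((i+1/2)_j (2j)_{2j−1} (i+1)_j)] · Σ_{k=0}^{i−j} [(−(i−j))_k (−i+j−1/2)_k (−i−j+1/2)_k (−i−j)_k] / [(−2i+1/2)_k (−i)_k (−i+1/2)_k k!]. -/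
/-!
Rodrigues' formula expands `p_{2i}` into monomials `t^{2i-2k}` with explicit coefficients
(`legendreMonic_expand`). With `n = 2j-1`, the moment `∫₀¹ t^m p_n(2t-1) dt` is computed by
writing `p_n(2t-1)` as a multiple of the `n`-th derivative of `t^n (1-t)^n`
(`legendreMonic_shift`), integrating by parts `n` times (`parts`) and evaluating a beta integral
(`beta_nat`); the result (`moment`) is a quotient of factorials carrying the factor
`m (m-1) ⋯ (m-n+1)`, so it vanishes when `m < n`, that is, when `k > i - j`.

The remaining sum over `k ≤ i - j` agrees with the hypergeometric sum term by term (`term_eq`):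
by the duplication identities `poch_neg_half` and `poch_half`, the product of two Pochhammer
symbols whose parameters differ by `1/2` is a quotient of factorials up to a power of `4`.
-/

open MeasureTheory

/-- The monic Legendre polynomial of degree `n`,
`p_n(t) = (n!/(2n)!) dⁿ/dtⁿ (t²-1)ⁿ`. -/
noncomputable def legendreMonic (n : ℕ) : ℝ → ℝ := fun t =>
  ((n.factorial : ℝ) / (2 * n).factorial) * iteratedDeriv n (fun s => (s ^ 2 - 1) ^ n) t

/-- The monic Legendre refinement integral `I_{i,j} = ∫_0^1 p_i(t) p_j(2t-1) dt`. -/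
noncomputable def alpertI (i j : ℕ) : ℝ :=
  ∫ t in (0:ℝ)..1, legendreMonic i t * legendreMonic j (2 * t - 1)

open Polynomial in
lemma iteratedDeriv_eval (P : ℝ[X]) (n : ℕ) :
    iteratedDeriv n (fun s => P.eval s) = fun s => (derivative^[n] P).eval s := by
  induction n with
  | zero => simp
  | succ n ih =>
    rw [iteratedDeriv_succ, ih, Function.iterate_succ_apply']
    funext s
    exact Polynomial.deriv _

open Polynomial in
/-- Monomial expansion from Rodrigues' formula. In a summand with `2 * (n - k) < n` the truncated
exponent is harmless, since the descending factorial is then zero. -/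
lemma legendreMonic_expand (n : ℕ) (t : ℝ) :
    legendreMonic n t = ∑ k ∈ Finset.range (n + 1),
      ((n.factorial : ℝ) / (2 * n).factorial) * ((-1) ^ k * n.choose k *
        (2 * (n - k)).descFactorial n) * t ^ (2 * (n - k) - n) := by
  have h : (fun s : ℝ => (s ^ 2 - 1) ^ n) = fun s =>
      (∑ k ∈ Finset.range (n + 1), C ((-1 : ℝ) ^ k * n.choose k) * X ^ (2 * (n - k))).eval s := by
    funext s
    rw [sub_eq_neg_add, add_pow, eval_finsetSum]
    refine Finset.sum_congr rfl fun k _ => ?_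
    simp only [eval_mul, eval_C, eval_pow, eval_X, pow_mul]
    ring
  unfold legendreMonic
  rw [h, iteratedDeriv_eval, iterate_derivative_sum]
  simp only [eval_finsetSum]
  rw [Finset.mul_sum]
  refine Finset.sum_congr rfl fun k _ => ?_
  rw [iterate_derivative_C_mul, iterate_derivative_X_pow_eq_natCast_mul]
  simp only [eval_mul, eval_C, eval_pow, eval_X, eval_natCast]
  ring

open Polynomial in
/-- Rodrigues' formula for the shifted polynomial, from `(2t-1)² - 1 = -4 t (1-t)` and the chain
rule. -/
lemma legendreMonic_shift (n : ℕ) (t : ℝ) :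
    legendreMonic n (2 * t - 1) = ((n.factorial : ℝ) / (2 * n).factorial) * ((-2) ^ n *
      (derivative^[n] (X ^ n * (1 - X) ^ n : ℝ[X])).eval t) := by
  have h1 : iteratedDeriv n (fun s : ℝ => (fun x : ℝ => (x ^ 2 - 1) ^ n) (2 * s - 1)) t =
      2 ^ n * iteratedDeriv n (fun x : ℝ => (x ^ 2 - 1) ^ n) (2 * t - 1) := by
    have hc : ContDiff ℝ n (fun x : ℝ => (x ^ 2 - 1) ^ n) := by fun_prop
    have hc' : ContDiff ℝ n (fun x : ℝ => ((x - 1) ^ 2 - 1) ^ n) := by fun_prop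
    have := iteratedDeriv_comp_const_mul hc' (2 : ℝ)
    have h2 := iteratedDeriv_comp_sub_const n (fun x : ℝ => (x ^ 2 - 1) ^ n) (1 : ℝ)
    rw [h2] at this
    have := congrFun this t
    simpa using this
  have h2 : (fun s : ℝ => (fun x : ℝ => (x ^ 2 - 1) ^ n) (2 * s - 1)) = fun s =>
      (C ((-4 : ℝ) ^ n) * (X ^ n * (1 - X) ^ n)).eval s := by
    funext s
    simp only [eval_mul, eval_C, eval_pow, eval_X, eval_sub, eval_one, ← mul_pow]
    ring
  rw [h2, iteratedDeriv_eval, iterate_derivative_C_mul] at h1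
  simp only [eval_mul, eval_C] at h1
  unfold legendreMonic
  congr 1
  have h4 : (-4 : ℝ) ^ n = 2 ^ n * (-2) ^ n := by rw [← mul_pow]; norm_num
  rw [h4, mul_assoc] at h1
  exact (mul_left_cancel₀ (by positivity) h1).symm

lemma beta_nat (a b : ℕ) :
    ∫ t in (0:ℝ)..1, t ^ a * (1 - t) ^ b =
      (a.factorial * b.factorial : ℝ) / (a + b + 1).factorial := by
  induction b generalizing a with
  | zero =>
    simp [integral_pow, Nat.factorial_succ]
    field_simp
  | succ b ih =>
    have h := intervalIntegral.integral_mul_deriv_eq_deriv_mul (a := (0:ℝ)) (b := 1)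
      (u := fun t => (1 - t) ^ (b + 1)) (u' := fun t => -((b + 1) * (1 - t) ^ b))
      (v := fun t => t ^ (a + 1)) (v' := fun t => (a + 1) * t ^ a)
      (fun t _ => by
        have := ((hasDerivAt_id' t).const_sub 1).fun_pow (b + 1)
        simpa using this)
      (fun t _ => by simpa using hasDerivAt_pow (a + 1) t)
      (Continuous.intervalIntegrable (by fun_prop) _ _)
      (Continuous.intervalIntegrable (by fun_prop) _ _)
    have e1 : (∫ t in (0:ℝ)..1, (1 - t) ^ (b + 1) * ((a + 1) * t ^ a)) =
        (a + 1) * ∫ t in (0:ℝ)..1, t ^ a * (1 - t) ^ (b + 1) := by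
      rw [← intervalIntegral.integral_const_mul]; congr 1; funext t; ring
    have e2 : (∫ t in (0:ℝ)..1, -((b + 1) * (1 - t) ^ b) * t ^ (a + 1)) =
        -(b + 1) * ∫ t in (0:ℝ)..1, t ^ (a + 1) * (1 - t) ^ b := by
      rw [← intervalIntegral.integral_const_mul]; congr 1; funext t; ring
    rw [e1, e2, ih] at h
    have hf : a + 1 + b + 1 = a + (b + 1) + 1 := by ring
    rw [hf] at h
    have ha : (a + 1 : ℝ) ≠ 0 := by positivity
    apply mul_left_cancel₀ ha
    rw [h]
    simp [Nat.factorial_succ]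
    ring

open Polynomial in
/-- The boundary terms in `parts` vanish, as `0` and `1` are roots of multiplicity `n`. -/
lemma boundary_zero (n r : ℕ) (hr : r < n) :
    (derivative^[r] (X ^ n * (1 - X) ^ n : ℝ[X])).eval 0 = 0 ∧
    (derivative^[r] (X ^ n * (1 - X) ^ n : ℝ[X])).eval 1 = 0 := by
  have key : ∀ a : ℝ, (X - C a) ^ n ∣ (X ^ n * (1 - X) ^ n : ℝ[X]) →
      (derivative^[r] (X ^ n * (1 - X) ^ n : ℝ[X])).eval a = 0 := by
    intro a h
    have h1 := pow_sub_dvd_iterate_derivative_of_pow_dvd r h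
    have h2 : X - C a ∣ derivative^[r] (X ^ n * (1 - X) ^ n : ℝ[X]) :=
      (dvd_pow_self _ (by omega)).trans h1
    exact dvd_iff_isRoot.mp h2
  constructor
  · exact key 0 (by simp)
  · refine key 1 (Dvd.dvd.mul_left (pow_dvd_pow_of_dvd ?_ n) _)
    exact ⟨-1, by simp⟩

open Polynomial in
/-- The result of `r` integrations by parts. Once `r > m` both sides are zero, so the truncated
exponent `m - r` is harmless. -/
lemma parts (m n r : ℕ) (hr : r ≤ n) :
    ∫ t in (0:ℝ)..1, t ^ m * (derivative^[n] (X ^ n * (1 - X) ^ n : ℝ[X])).eval t =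
      (-1) ^ r * m.descFactorial r *
        ∫ t in (0:ℝ)..1, t ^ (m - r) * (derivative^[n - r] (X ^ n * (1 - X) ^ n : ℝ[X])).eval t := by
  induction r with
  | zero => simp
  | succ r ih =>
    rw [ih (by omega)]
    obtain ⟨h0, h1⟩ := boundary_zero n (n - (r + 1)) (by omega)
    have hs : n - r = (n - (r + 1)) + 1 := by omega
    have h := intervalIntegral.integral_mul_deriv_eq_deriv_mul (a := (0:ℝ)) (b := 1)
      (u := fun t => t ^ (m - r)) (u' := fun t => ((m - r : ℕ) : ℝ) * t ^ (m - r - 1))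
      (v := fun t => (derivative^[n - (r + 1)] (X ^ n * (1 - X) ^ n : ℝ[X])).eval t)
      (v' := fun t => (derivative^[n - r] (X ^ n * (1 - X) ^ n : ℝ[X])).eval t)
      (fun t _ => hasDerivAt_pow _ t)
      (fun t _ => by
        rw [hs, Function.iterate_succ_apply']
        exact Polynomial.hasDerivAt _ t)
      (Continuous.intervalIntegrable (by fun_prop) _ _)
      (Continuous.intervalIntegrable (by fun_prop) _ _)
    rw [h, h0, h1]
    simp only [mul_assoc, intervalIntegral.integral_const_mul, Nat.descFactorial_succ,
      Nat.cast_mul, pow_succ, Nat.sub_sub]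
    ring

lemma moment (m n : ℕ) :
    ∫ t in (0:ℝ)..1, t ^ m * legendreMonic n (2 * t - 1) =
      ((n.factorial : ℝ) / (2 * n).factorial) * 2 ^ n * m.descFactorial n *
        (m.factorial * n.factorial / (m + n + 1).factorial) := by
  have e : ∀ t : ℝ, t ^ m * legendreMonic n (2 * t - 1) =
      ((n.factorial : ℝ) / (2 * n).factorial * (-2) ^ n) *
      (t ^ m * (Polynomial.derivative^[n]
        (Polynomial.X ^ n * (1 - Polynomial.X) ^ n : Polynomial ℝ)).eval t) := by
    intro t; rw [legendreMonic_shift]; ring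
  simp only [e, intervalIntegral.integral_const_mul]
  rw [parts m n n le_rfl]
  have h2 : (-2 : ℝ) ^ n * (-1) ^ n = 2 ^ n := by rw [← mul_pow]; norm_num
  rcases lt_or_ge m n with hmn | hmn
  · simp [Nat.descFactorial_eq_zero_iff_lt.mpr hmn]
  · have e2 : ∀ t : ℝ, t ^ (m - n) * (Polynomial.derivative^[n - n]
        (Polynomial.X ^ n * (1 - Polynomial.X) ^ n : Polynomial ℝ)).eval t =
        t ^ m * (1 - t) ^ n := by
      intro t
      simp only [Nat.sub_self, Function.iterate_zero, id, Polynomial.eval_mul,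
        Polynomial.eval_pow, Polynomial.eval_X, Polynomial.eval_sub, Polynomial.eval_one]
      rw [← mul_assoc, ← pow_add, Nat.sub_add_cancel hmn]
    simp only [e2, beta_nat]
    rw [← h2]
    ring

lemma poch_succ (a : ℝ) (k : ℕ) : poch a (k + 1) = poch a k * (a + k) :=
  Finset.prod_range_succ _ _

/-- Duplication: `(-N/2)_k (-N/2+1/2)_k = 4^{-k} N (N-1) ⋯ (N-2k+1)`. -/
lemma poch_neg_half (N k : ℕ) (h : 2 * k ≤ N) :
    poch (-(N / 2 : ℝ)) k * poch (-(N / 2 : ℝ) + 1 / 2) k * 4 ^ k * (N - 2 * k).factorial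
      = N.factorial := by
  induction k with
  | zero => simp [poch]
  | succ k ih =>
    obtain ⟨M, rfl⟩ := Nat.exists_eq_add_of_le h
    have h1 : 2 * (k + 1) + M - 2 * k = M + 1 + 1 := by omega
    rw [← ih (by omega), h1, Nat.add_sub_cancel_left, poch_succ, poch_succ,
      Nat.factorial_succ, Nat.factorial_succ]
    push_cast
    ring

lemma poch_neg_nat (N k : ℕ) (h : k ≤ N) :
    poch (-(N : ℝ)) k * (-1) ^ k * (N - k).factorial = N.factorial := by
  induction k with
  | zero => simp [poch]
  | succ k ih =>
    obtain ⟨M, rfl⟩ := Nat.exists_eq_add_of_le h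
    have h1 : k + 1 + M - k = M + 1 := by omega
    rw [← ih (by omega), h1, Nat.add_sub_cancel_left, poch_succ, Nat.factorial_succ]
    push_cast
    ring

lemma poch_nat (N k : ℕ) : poch (N + 1 : ℝ) k * N.factorial = (N + k).factorial := by
  induction k with
  | zero => simp [poch]
  | succ k ih =>
    rw [poch_succ, ← add_assoc, Nat.factorial_succ]
    push_cast
    rw [← ih]
    ring

/-- Duplication: `(i+1/2)_k (i+1)_k = 4^{-k} (2i+2k)!/(2i)!`. -/
lemma poch_half (i k : ℕ) :
    poch ((i : ℝ) + 1 / 2) k * poch (i + 1 : ℝ) k * 4 ^ k * (2 * i).factorial =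
      (2 * i + 2 * k).factorial := by
  induction k with
  | zero => simp [poch]
  | succ k ih =>
    have h1 : 2 * i + 2 * (k + 1) = 2 * i + 2 * k + 1 + 1 := by ring
    rw [h1, Nat.factorial_succ, Nat.factorial_succ, poch_succ, poch_succ]
    push_cast
    rw [← ih]
    ring

/-- Agreement of the `k`-th summands, with `j = l + 1` and `i = l + 1 + d`: the left side is the
coefficient of `t^{2i-2k}` in `p_{2i}` times the corresponding moment, the right side the prefactor
times the `k`-th hypergeometric term. -/
lemma term_eq (l d k : ℕ) (hk : k ≤ d) :
    (((2 * (l + 1 + d)).factorial : ℝ) / (2 * (2 * (l + 1 + d))).factorial) *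
      ((-1) ^ k * (2 * (l + 1 + d)).choose k *
        (2 * (2 * (l + 1 + d) - k)).descFactorial (2 * (l + 1 + d))) *
      ((((2 * l + 1).factorial : ℝ) / (2 * (2 * l + 1)).factorial) * 2 ^ (2 * l + 1) *
        (2 * (2 * (l + 1 + d) - k) - 2 * (l + 1 + d)).descFactorial (2 * l + 1) *
        ((2 * (2 * (l + 1 + d) - k) - 2 * (l + 1 + d)).factorial * (2 * l + 1).factorial /
          (2 * (2 * (l + 1 + d) - k) - 2 * (l + 1 + d) + (2 * l + 1) + 1).factorial)) =
    -((2 : ℝ) ^ (2 * l)) *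
        (poch (-((l + 1 + d : ℕ) : ℝ)) (l + 1) * poch (-((l + 1 + d : ℕ) : ℝ) + 1 / 2) l *
          (2 * l + 1).factorial /
          (poch (((l + 1 + d : ℕ) : ℝ) + 1 / 2) (l + 1) *
            poch (2 * ((l + 1 : ℕ) : ℝ)) (2 * l + 1) *
            poch (((l + 1 + d : ℕ) : ℝ) + 1) (l + 1))) *
        (poch (-(((l + 1 + d : ℕ) : ℝ) - (l + 1 : ℕ))) k *
          poch (-((l + 1 + d : ℕ) : ℝ) + (l + 1 : ℕ) - 1 / 2) k *
              poch (-((l + 1 + d : ℕ) : ℝ) - (l + 1 : ℕ) + 1 / 2) k *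
              poch (-((l + 1 + d : ℕ) : ℝ) - (l + 1 : ℕ)) k /
            (poch (-2 * ((l + 1 + d : ℕ) : ℝ) + 1 / 2) k * poch (-((l + 1 + d : ℕ) : ℝ)) k *
              poch (-((l + 1 + d : ℕ) : ℝ) + 1 / 2) k * k.factorial)) := by
  obtain ⟨e, rfl⟩ := Nat.exists_eq_add_of_le hk
  set i := l + 1 + (k + e) with hi
  have n1 : 2 * (2 * i - k) - 2 * i = 2 * i - 2 * k := by omega
  have n2 : 2 * (2 * i - k) - 2 * i + (2 * l + 1) + 1 = 2 * i + 2 * (l + 1) - 2 * k := by omega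
  rw [n2, n1]
  have H1 := poch_neg_half (2 * i) k (by omega)
  have H2 := poch_neg_half (2 * i + 2 * (l + 1)) k (by omega)
  have H3 := poch_neg_half (2 * (k + e) + 1) k (by omega)
  have H4 := poch_neg_half (2 * (2 * i)) k (by omega)
  have H5 := poch_neg_nat (2 * i) k (by omega)
  have H6 := Nat.choose_mul_factorial_mul_factorial (show k ≤ 2 * i by omega)
  have H7 := Nat.factorial_mul_descFactorial (show 2 * i ≤ 2 * (2 * i - k) by omega)
  have H8 := Nat.factorial_mul_descFactorial (show 2 * l + 1 ≤ 2 * i - 2 * k by omega)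
  have H9 := poch_neg_half (2 * i) l (by omega)
  have H10 := poch_half i (l + 1)
  have H11 := poch_nat (2 * l + 1) (2 * l + 1)
  rw [n1] at H7
  rw [show 2 * (2 * i) - 2 * k = 2 * (2 * i - k) by omega] at H4
  rw [show 2 * i - 2 * k - (2 * l + 1) = 2 * e + 1 by omega] at H8
  rw [show 2 * (k + e) + 1 - 2 * k = 2 * e + 1 by omega] at H3
  rw [show 2 * i - 2 * l = 2 * (k + e) + 1 + 1 by omega, Nat.factorial_succ] at H9
  rw [show 2 * l + 1 + (2 * l + 1) = 2 * (2 * l + 1) by ring] at H11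
  rw [show -(((2 * i : ℕ) : ℝ) / 2) = -(i : ℝ) by push_cast; ring] at H1 H9
  rw [show -(((2 * i + 2 * (l + 1) : ℕ) : ℝ) / 2) = -(i : ℝ) - (l + 1 : ℕ) by
    push_cast; ring] at H2
  rw [show -(((2 * (k + e) + 1 : ℕ) : ℝ) / 2) = -(i : ℝ) + (l + 1 : ℕ) - 1 / 2 by
    rw [hi]; push_cast; ring,
    show -(i : ℝ) + (l + 1 : ℕ) - 1 / 2 + 1 / 2 = -((i : ℝ) - (l + 1 : ℕ)) by ring] at H3
  rw [show -(((2 * (2 * i) : ℕ) : ℝ) / 2) = -((2 * i : ℕ) : ℝ) by push_cast; ring,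
    show -((2 * i : ℕ) : ℝ) + 1 / 2 = -2 * (i : ℝ) + 1 / 2 by push_cast; ring] at H4
  rw [show ((2 * l + 1 : ℕ) : ℝ) + 1 = 2 * ((l + 1 : ℕ) : ℝ) by push_cast; ring] at H11
  have hU : poch (-(i : ℝ)) (l + 1) = poch (-(i : ℝ)) l * -((k + e + 1 : ℕ) : ℝ) := by
    rw [poch_succ, hi]; push_cast; ring
  rw [hU]
  have H6' : ((2 * i).choose k : ℝ) * k.factorial * (2 * i - k).factorial =
    (2 * i).factorial := by exact_mod_cast H6
  have H7' : ((2 * i - 2 * k).factorial : ℝ) * (2 * (2 * i - k)).descFactorial (2 * i) =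
    (2 * (2 * i - k)).factorial := by exact_mod_cast H7
  have H8' : ((2 * e + 1).factorial : ℝ) * (2 * i - 2 * k).descFactorial (2 * l + 1) =
    (2 * i - 2 * k).factorial := by exact_mod_cast H8
  have H9' : poch (-(i : ℝ)) l * poch (-(i : ℝ) + 1 / 2) l * 4 ^ l *
    (2 * ((k + e + 1 : ℕ) : ℝ) * (2 * (k + e) + 1).factorial) = (2 * i).factorial := by
    rw [← H9]; push_cast; ring
  clear H6 H7 H8 H9 hU n1 n2
  rw [show (2 : ℝ) ^ (2 * l + 1) = 2 * 4 ^ l by rw [pow_succ, pow_mul]; norm_num; ring,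
    show (2 : ℝ) ^ (2 * l) = 4 ^ l by rw [pow_mul]; norm_num]
  rw [pow_succ] at H10
  have hs : ((-1 : ℝ) ^ k) * (-1) ^ k = 1 := by rw [← mul_pow]; norm_num
  have hx : (4 : ℝ) ^ k ≠ 0 := by positivity
  have hy : (4 : ℝ) ^ l ≠ 0 := by positivity
  have g0 : ((2 * i).factorial : ℝ) ≠ 0 := by positivity
  have g1 : ((2 * (2 * i)).factorial : ℝ) ≠ 0 := by positivity
  have g2 : ((2 * i - 2 * k).factorial : ℝ) ≠ 0 := by positivity
  have g3 : ((2 * i + 2 * (l + 1) - 2 * k).factorial : ℝ) ≠ 0 := by positivity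
  have g4 : ((2 * i + 2 * (l + 1)).factorial : ℝ) ≠ 0 := by positivity
  have g5 : ((2 * (k + e) + 1).factorial : ℝ) ≠ 0 := by positivity
  have g6 : ((2 * e + 1).factorial : ℝ) ≠ 0 := by positivity
  have g7 : ((2 * (2 * i - k)).factorial : ℝ) ≠ 0 := by positivity
  have g8 : ((2 * i - k).factorial : ℝ) ≠ 0 := by positivity
  have g9 : ((2 * l + 1).factorial : ℝ) ≠ 0 := by positivity
  have g10 : ((2 * (2 * l + 1)).factorial : ℝ) ≠ 0 := by positivity
  have g11 : (k.factorial : ℝ) ≠ 0 := by positivity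
  have g12 : ((k + e + 1 : ℕ) : ℝ) ≠ 0 := by positivity
  -- What remains is an identity of rational functions in the factorials and Pochhammer symbols,
  -- subject to the relations `H1`, ..., `H11`.
  generalize ((2 * i).factorial : ℝ) = f0 at *
  generalize ((2 * (2 * i)).factorial : ℝ) = f1 at *
  generalize ((2 * i - 2 * k).factorial : ℝ) = f2 at *
  generalize ((2 * i + 2 * (l + 1) - 2 * k).factorial : ℝ) = f3 at *
  generalize ((2 * i + 2 * (l + 1)).factorial : ℝ) = f4 at *
  generalize ((2 * (k + e) + 1).factorial : ℝ) = f5 at *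
  generalize ((2 * e + 1).factorial : ℝ) = f6 at *
  generalize ((2 * (2 * i - k)).factorial : ℝ) = f7 at *
  generalize ((2 * i - k).factorial : ℝ) = f8 at *
  generalize ((2 * l + 1).factorial : ℝ) = f9 at *
  generalize ((2 * (2 * l + 1)).factorial : ℝ) = f10 at *
  generalize (k.factorial : ℝ) = f11 at *
  generalize ((k + e + 1 : ℕ) : ℝ) = f12 at *
  generalize ((2 * i).choose k : ℝ) = c at *
  generalize ((2 * (2 * i - k)).descFactorial (2 * i) : ℝ) = D1 at *
  generalize ((2 * i - 2 * k).descFactorial (2 * l + 1) : ℝ) = D2 at *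
  generalize poch (-((2 * i : ℕ) : ℝ)) k = Q at *
  generalize poch (-2 * (i : ℝ) + 1 / 2) k = R at *
  generalize poch (-(i : ℝ)) k = A at *
  generalize poch (-(i : ℝ) + 1 / 2) k = B at *
  generalize poch (-(i : ℝ)) l = U at *
  generalize poch (-(i : ℝ) + 1 / 2) l = V at *
  generalize poch (-((i : ℝ) - (l + 1 : ℕ))) k = P1 at *
  generalize poch (-(i : ℝ) + (l + 1 : ℕ) - 1 / 2) k = P2 at *
  generalize poch (-(i : ℝ) - (l + 1 : ℕ) + 1 / 2) k = P3 at *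
  generalize poch (-(i : ℝ) - (l + 1 : ℕ)) k = P4 at *
  generalize poch ((i : ℝ) + 1 / 2) (l + 1) = W at *
  generalize poch ((i : ℝ) + 1) (l + 1) = Z at *
  generalize poch (2 * ((l + 1 : ℕ) : ℝ)) (2 * l + 1) = Y at *
  generalize (4 : ℝ) ^ k = x at *
  generalize (4 : ℝ) ^ l = y at *
  generalize (-1 : ℝ) ^ k = s at *
  clear hi hk
  have hs0 : s ≠ 0 := left_ne_zero_of_mul_eq_one hs
  have hc : c = f0 / (f11 * f8) := by field_simp; linear_combination H6'
  have hD1 : D1 = f7 / f2 := by field_simp; linear_combination H7'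
  have hD2 : D2 = f2 / f6 := by field_simp; linear_combination H8'
  have hQ : Q = f0 / (s * f8) := by field_simp; linear_combination H5
  have hR : R = f1 * s * f8 / (f0 * x * f7) := by
    rw [hQ] at H4; field_simp at H4 ⊢; linear_combination H4
  have hAB : A * B = f0 / (x * f2) := by field_simp; linear_combination H1
  have hP34 : P3 * P4 = f4 / (x * f3) := by field_simp; linear_combination H2
  have hP12 : P1 * P2 = f5 / (x * f6) := by field_simp; linear_combination H3
  have hUV : U * V = f0 / (2 * y * f12 * f5) := by field_simp; linear_combination H9'
  have hWZ : W * Z = f4 / (4 * y * f0) := by field_simp; linear_combination H10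
  have hY : Y = f10 / f9 := by field_simp; linear_combination H11
  have hrhs : -y * (U * -f12 * V * f9 / (W * Y * Z)) * (P1 * P2 * P3 * P4 / (R * A * B * f11)) =
      y * ((U * V) * f12 * f9 / ((W * Z) * Y)) *
        ((P1 * P2) * (P3 * P4) / (R * (A * B) * f11)) := by ring
  rw [hrhs, hAB, hP34, hP12, hUV, hWZ, hY, hR, hc, hD1, hD2]
  have hs2 : s ^ 2 = 1 := by rw [sq]; exact hs
  field_simp
  rw [hs2]
  norm_num

theorem alpertI_even_odd (i j : ℕ) (hj : 1 ≤ j) (hij : j ≤ i) :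
    alpertI (2 * i) (2 * j - 1) =
      -((2 : ℝ) ^ (2 * (j : ℤ) - 2)) *
        (poch (-(i : ℝ)) j * poch (-(i : ℝ) + 1 / 2) (j - 1) * (2 * j - 1).factorial /
          (poch ((i : ℝ) + 1 / 2) j * poch (2 * j) (2 * j - 1) * poch ((i : ℝ) + 1) j)) *
        ∑ k ∈ Finset.range (i - j + 1),
          poch (-((i : ℝ) - j)) k * poch (-(i : ℝ) + j - 1 / 2) k *
              poch (-(i : ℝ) - j + 1 / 2) k * poch (-(i : ℝ) - j) k /
            (poch (-2 * i + 1 / 2) k * poch (-(i : ℝ)) k * poch (-(i : ℝ) + 1 / 2) k *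
              k.factorial) := by
  obtain ⟨l, rfl⟩ := Nat.exists_eq_add_of_le' hj
  obtain ⟨d, rfl⟩ := Nat.exists_eq_add_of_le hij
  have hz : (2 : ℝ) ^ (2 * ((l + 1 : ℕ) : ℤ) - 2) = 2 ^ (2 * l) := by
    rw [← zpow_natCast]; congr 1; push_cast; ring
  rw [hz, show 2 * (l + 1) - 1 = 2 * l + 1 by omega, show l + 1 - 1 = l by omega,
    show l + 1 + d - (l + 1) + 1 = d + 1 by omega, Finset.mul_sum]
  have hcont : Continuous fun t : ℝ => legendreMonic (2 * l + 1) (2 * t - 1) := by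
    simp only [legendreMonic_shift]
    fun_prop
  unfold alpertI
  simp only [legendreMonic_expand (2 * (l + 1 + d)), Finset.sum_mul, mul_assoc _ (_ ^ _)
    (legendreMonic _ _)]
  rw [intervalIntegral.integral_finsetSum
    (fun k _ => Continuous.intervalIntegrable (by fun_prop) _ _)]
  simp only [intervalIntegral.integral_const_mul, moment]
  symm
  refine (Finset.sum_congr rfl fun k hk =>
    (term_eq l d k (by simpa [Nat.lt_succ_iff] using hk)).symm).trans ?_
  refine Finset.sum_subset (Finset.range_subset_range.mpr (by omega)) fun k _ hk => ?_
  -- For `k > d` the monomial has degree below `2 * l + 1`, and its moment vanishes.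
  have hkd : d < k := by simpa [Nat.lt_succ_iff] using hk
  have : (2 * (2 * (l + 1 + d) - k) - 2 * (l + 1 + d)).descFactorial (2 * l + 1) = 0 :=
    Nat.descFactorial_eq_zero_iff_lt.mpr (by omega)
  rw [this]
  simp
end
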